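/- Assume dom f ≠ ∅ and fix α ∈ (0,1). Then the function Q_{VaR_α} : P_Z → ℝ, Q_{VaR_α}(x) := inf { η ∈ ℝ : μ_Z({ z ∈ ℝˢ : f(x,z) ≤ η }) ≥ α }, is continuous on P_Z. Moreover, if X ⊆ P_Z is nonempty and compact, then Q_{VaR_α} attains its minimum over X. -/

import Mathlib

open MeasureTheory Matrix Set Topology Filter
open scoped ENNReal NNReal

noncomputable section

/-- Feasible set of the lower level problem: `{ y | A y ≤ T x + z }`. -/
def LowerFeas {n m s : ℕ} (A : Matrix (Fin s) (Fin m) ℝ) (T : Matrix (Fin s) (Fin n) ℝ)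
    (x : Fin n → ℝ) (z : Fin s → ℝ) : Set (Fin m → ℝ) :=
  {y | A.mulVec y ≤ T.mulVec x + z}

/-- Lower level optimal solution set `Ψ(x,z) = Argmin { dᵀy | A y ≤ T x + z }`. -/
def Psi {n m s : ℕ} (d : Fin m → ℝ) (A : Matrix (Fin s) (Fin m) ℝ)
    (T : Matrix (Fin s) (Fin n) ℝ) (x : Fin n → ℝ) (z : Fin s → ℝ) : Set (Fin m → ℝ) :=
  {y | y ∈ LowerFeas A T x z ∧ ∀ y' ∈ LowerFeas A T x z, d ⬝ᵥ y ≤ d ⬝ᵥ y'}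

/-- `f(x,z) = cᵀx + inf { qᵀ y | y ∈ Ψ(x,z) }` with values in `ℝ ∪ {±∞}`
(the infimum over the empty set being `+∞`). -/
def fE {n m s : ℕ} (c : Fin n → ℝ) (q d : Fin m → ℝ) (A : Matrix (Fin s) (Fin m) ℝ)
    (T : Matrix (Fin s) (Fin n) ℝ) (x : Fin n → ℝ) (z : Fin s → ℝ) : EReal :=
  ((c ⬝ᵥ x : ℝ) : EReal) + sInf ((fun y => ((q ⬝ᵥ y : ℝ) : EReal)) '' Psi d A T x z)

/-- `P = { (x,z) | ∃ y, A y ≤ T x + z }`. -/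
def Pfeas {n m s : ℕ} (A : Matrix (Fin s) (Fin m) ℝ) (T : Matrix (Fin s) (Fin n) ℝ) :
    Set ((Fin n → ℝ) × (Fin s → ℝ)) :=
  {p | (LowerFeas A T p.1 p.2).Nonempty}

/-- `dom f = { (x,z) | f(x,z) ∈ ℝ }`. -/
def domf {n m s : ℕ} (c : Fin n → ℝ) (q d : Fin m → ℝ) (A : Matrix (Fin s) (Fin m) ℝ)
    (T : Matrix (Fin s) (Fin n) ℝ) : Set ((Fin n → ℝ) × (Fin s → ℝ)) :=
  {p | fE c q d A T p.1 p.2 ≠ ⊤ ∧ fE c q d A T p.1 p.2 ≠ ⊥}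

/-- Topological support of a Borel measure. -/
def msupport {s : ℕ} (μ : Measure (Fin s → ℝ)) : Set (Fin s → ℝ) :=
  {z | ∀ U : Set (Fin s → ℝ), IsOpen U → z ∈ U → μ U ≠ 0}

/-- `P_Z = { x | (x,z) ∈ P for all z ∈ supp μ_Z }`. -/
def PZSet {n m s : ℕ} (A : Matrix (Fin s) (Fin m) ℝ) (T : Matrix (Fin s) (Fin n) ℝ)
    (μZ : Measure (Fin s → ℝ)) : Set (Fin n → ℝ) :=
  {x | ∀ z ∈ msupport μZ, (x, z) ∈ Pfeas A T}

/-!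
The epigraph of the value function of a linear program is the sum of a positive cone and a subspace.
Fourier–Motzkin elimination shows that such a sum is again cut out by finitely many linear
inequalities, so on the feasible right-hand sides the value function is a maximum of finitely many
linear functionals: it is attained and globally Lipschitz.  The argmin of the lower level problem is
the feasible set of a linear program whose right-hand side is extended by the lower level value, so
the upper level value is attained and Lipschitz too.  Since value-at-risk is monotone and commutes
with adding constants, a bound `F x ≤ F y + K * dist x y` on the costs passes to it.
-/

open PointedCone Module

section Cone

variable {R N : Type*} [Ring R] [PartialOrder R] [IsOrderedRing R] [AddCommGroup N] [Module R N]

theorem mem_sup_hull_singleton {C : PointedCone R N} {v x : N} :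
    x ∈ C ⊔ hull R {v} ↔ ∃ t : R, 0 ≤ t ∧ x - t • v ∈ C := by
  rw [Submodule.mem_sup]
  constructor
  · rintro ⟨y, hy, z, hz, rfl⟩
    obtain ⟨t, rfl⟩ := Submodule.mem_span_singleton.mp hz
    exact ⟨t, t.2, by simpa [Nonneg.mk_smul] using hy⟩
  · rintro ⟨t, ht, hx⟩
    exact ⟨x - t • v, hx, t • v,
      smul_mem _ ht (subset_hull (mem_singleton v)), sub_add_cancel _ _⟩

end Cone

instance finite_nonneg {R : Type*} [Ring R] [LinearOrder R] [IsOrderedRing R] :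
    Module.Finite {c : R // 0 ≤ c} R := by
  refine ⟨⟨{1, -1}, eq_top_iff.mpr fun c _ => ?_⟩⟩
  have mul_mem_hull (a x : R) (ha : 0 ≤ a) (hx : x ∈ ({1, -1} : Set R)) :
      a * x ∈ hull R {1, -1} := smul_mem _ ha (subset_hull hx)
  rw [Finset.coe_pair]
  rcases le_total 0 c with hc | hc
  · simpa using mul_mem_hull c 1 hc (by simp)
  · simpa using mul_mem_hull (-c) (-1) (by simpa) (by simp)

section FourierMotzkin

variable {R : Type*} [Field R] [LinearOrder R] [IsStrictOrderedRing R]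

theorem exists_nonneg_forall_mul_le {ι : Type*} (S : Finset ι) (a b : ι → R)
    (hnonneg : ∀ i ∈ S, 0 ≤ b i → 0 ≤ a i)
    (hcross : ∀ i ∈ S, 0 < b i → ∀ j ∈ S, b j < 0 → a i * b j ≤ b i * a j) :
    ∃ t : R, 0 ≤ t ∧ ∀ i ∈ S, t * b i ≤ a i := by
  let lower : Finset R := insert 0 ((S.filter (b · < 0)).image fun j => a j / b j)
  have hlower : lower.Nonempty := Finset.insert_nonempty _ _
  refine ⟨lower.max' hlower, lower.le_max' _ (Finset.mem_insert_self _ _), fun i hi => ?_⟩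
  rcases lt_trichotomy (b i) 0 with hneg | hzero | hpos
  · rw [← div_le_iff_of_neg hneg]
    exact lower.le_max' _ (Finset.mem_insert_of_mem
      (Finset.mem_image_of_mem _ (Finset.mem_filter.mpr ⟨hi, hneg⟩)))
  · simpa only [hzero, mul_zero] using hnonneg i hi hzero.ge
  · rw [← le_div_iff₀ hpos]
    refine Finset.max'_le _ _ _ fun r hr => ?_
    rcases Finset.mem_insert.mp hr with rfl | hr
    · exact div_nonneg (hnonneg i hi hpos.le) hpos.le
    · obtain ⟨j, hj, rfl⟩ := Finset.mem_image.mp hr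
      obtain ⟨hj, hneg⟩ := Finset.mem_filter.mp hj
      rw [div_le_iff_of_neg hneg, div_mul_eq_mul_div, div_le_iff₀ hpos, mul_comm (a j)]
      exact hcross i hi hpos j hj hneg

variable {M N : Type*} [AddCommGroup M] [Module R M] [AddCommGroup N] [Module R N]
  {p : M →ₗ[R] N →ₗ[R] R}

theorem dualFG_sup_hull_singleton {C : PointedCone R N} (hC : C.DualFG p) (v : N) :
    (C ⊔ hull R {v}).DualFG p := by
  classical
  obtain ⟨Φ, rfl⟩ := hC
  -- Eliminating `t` from `∀ φ ∈ Φ, t * φ v ≤ φ x` and `0 ≤ t` pairs each upper bound on `t`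
  -- (`0 < φ v`) with each lower bound (`φ v < 0`, or `0`); the combinations `cross` vanish at `v`.
  let nonneg : Finset M := Φ.filter fun φ => 0 ≤ p φ v
  let cross : Finset M := (Φ.filter (0 < p · v) ×ˢ Φ.filter (p · v < 0)).image
    fun φψ => p φψ.1 v • φψ.2 - p φψ.2 v • φψ.1
  refine ⟨nonneg ∪ cross, PointedCone.ext fun x => ?_⟩
  rw [mem_sup_hull_singleton]
  simp only [mem_dual, Finset.mem_coe, map_sub, map_smul, smul_eq_mul, sub_nonneg]
  constructor
  · intro hx
    refine exists_nonneg_forall_mul_le Φ (p · x) (p · v) (fun φ hφ hv => ?_)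
      fun φ hφ hφv ψ hψ hψv => ?_
    · exact hx (Finset.mem_union_left _ (Finset.mem_filter.mpr ⟨hφ, hv⟩))
    · have hcross := hx (Finset.mem_union_right _ (Finset.mem_image_of_mem _
        (Finset.mk_mem_product (Finset.mem_filter.mpr ⟨hφ, hφv⟩)
          (Finset.mem_filter.mpr ⟨hψ, hψv⟩))))
      simp only [map_sub, map_smul, LinearMap.sub_apply, LinearMap.smul_apply, smul_eq_mul,
        sub_nonneg] at hcross
      linarith
  · rintro ⟨t, ht, hx⟩ φ hφ
    rcases Finset.mem_union.mp hφ with hφ | hφ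
    · obtain ⟨hφ, hv⟩ := Finset.mem_filter.mp hφ
      exact (mul_nonneg ht hv).trans (hx hφ)
    · obtain ⟨⟨φ, ψ⟩, hφψ, rfl⟩ := Finset.mem_image.mp hφ
      simp only [Finset.mem_product, Finset.mem_filter] at hφψ
      obtain ⟨⟨hφ, hφv⟩, hψ, hψv⟩ := hφψ
      have hφx := mul_le_mul_of_nonpos_right (hx hφ) hψv.le
      have hψx := mul_le_mul_of_nonneg_left (hx hψ) hφv.le
      simp only [map_sub, map_smul, LinearMap.sub_apply, LinearMap.smul_apply, smul_eq_mul,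
        sub_nonneg]
      linarith

theorem dualFG_sup_of_fg {C D : PointedCone R N} (hC : C.DualFG p) (hD : D.FG) :
    (C ⊔ D).DualFG p := by
  induction D, hD using Submodule.fg_induction generalizing C with
  | singleton v => exact dualFG_sup_hull_singleton hC v
  | sup D₁ D₂ _ _ ih₁ ih₂ =>
    rw [← sup_assoc]
    exact ih₂ (ih₁ hC)

end FourierMotzkin

section Positive

variable {R : Type*} [CommRing R] [PartialOrder R] [IsOrderedRing R]

theorem dualFG_positive_self : (positive R R).DualFG .id :=
  ⟨{.id}, by ext; simp⟩

theorem dualFG_positive_pi (ι : Type*) [Finite ι] : (positive R (ι → R)).DualFG .id := by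
  classical
  have := Fintype.ofFinite ι
  exact ⟨Finset.univ.image fun i => LinearMap.proj i, by ext; simp [Pi.le_def]⟩

variable {E F : Type*} [AddCommGroup E] [Module R E] [PartialOrder E] [IsOrderedAddMonoid E]
  [PosSMulMono R E] [AddCommGroup F] [Module R F] [PartialOrder F] [IsOrderedAddMonoid F]
  [PosSMulMono R F]

theorem dualFG_positive_prod (hE : (positive R E).DualFG .id) (hF : (positive R F).DualFG .id) :
    (positive R (E × F)).DualFG .id := by
  classical
  obtain ⟨Φ, hΦ⟩ := hE
  obtain ⟨Ψ, hΨ⟩ := hF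
  refine ⟨Φ.image (LinearMap.fst R E F).dualMap ∪ Ψ.image (LinearMap.snd R E F).dualMap, ?_⟩
  ext ⟨x, y⟩
  have hx : (∀ φ ∈ Φ, 0 ≤ φ x) ↔ 0 ≤ x := SetLike.ext_iff.mp hΦ x
  have hy : (∀ ψ ∈ Ψ, 0 ≤ ψ y) ↔ 0 ≤ y := SetLike.ext_iff.mp hΨ y
  rw [mem_positive, Prod.le_def, Prod.fst_zero, Prod.snd_zero, ← hx, ← hy]
  simp [or_imp, forall_and]

end Positive

section Epigraph

variable {R V F : Type*} [Ring R] [PartialOrder R] [IsOrderedRing R] [AddCommGroup V] [Module R V]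
  [AddCommGroup F] [Module R F] [PartialOrder F] [IsOrderedAddMonoid F] [PosSMulMono R F]

/-- The cone of all `(b, t)` such that the linear program of minimizing `q y` subject to `A y ≤ b`
has a feasible point of cost at most `t`, encoded as the sum of the positive cone and the range of
`y ↦ (A y, q y)`. -/
def epigraphCone (A : V →ₗ[R] F) (q : Dual R V) : PointedCone R (F × R) :=
  positive R (F × R) ⊔ ofSubmodule (LinearMap.range (A.prod q))

theorem mem_epigraphCone {A : V →ₗ[R] F} {q : Dual R V} {b : F} {t : R} :
    (b, t) ∈ epigraphCone A q ↔ ∃ y, A y ≤ b ∧ q y ≤ t := by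
  rw [epigraphCone, Submodule.mem_sup]
  constructor
  · rintro ⟨w, hw, _, ⟨y, rfl⟩, h⟩
    rw [← eq_sub_iff_add_eq] at h
    rw [h, mem_positive, sub_nonneg] at hw
    exact ⟨y, hw⟩
  · rintro ⟨y, hy⟩
    exact ⟨(b, t) - A.prod q y, sub_nonneg.mpr (Prod.mk_le_mk.mpr hy), A.prod q y, ⟨y, rfl⟩,
      sub_add_cancel _ _⟩

end Epigraph

section ValueFunction

variable {R V F : Type*} [Field R] [LinearOrder R] [IsStrictOrderedRing R]
  [AddCommGroup V] [Module R V] [Module.Finite R V]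
  [AddCommGroup F] [Module R F] [PartialOrder F] [IsOrderedAddMonoid F] [PosSMulMono R F]

theorem dualFG_epigraphCone (hF : (positive R F).DualFG .id) (A : V →ₗ[R] F) (q : Dual R V) :
    (epigraphCone A q).DualFG .id :=
  dualFG_sup_of_fg (dualFG_positive_prod hF dualFG_positive_self)
    (Submodule.FG.restrictScalars (Module.Finite.iff_fg.mp inferInstance))

theorem exists_finset_forall_exists_le_iff (hF : (positive R F).DualFG .id)
    (A : V →ₗ[R] F) (q : Dual R V) :
    ∃ Φ : Finset (Dual R F), ∀ b, (∃ y, A y ≤ b) →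
      ∀ t, (∃ y, A y ≤ b ∧ q y ≤ t) ↔ ∀ φ ∈ Φ, φ b ≤ t := by
  classical
  obtain ⟨Ψ, hΨ⟩ := dualFG_epigraphCone hF A q
  have mem_iff (b : F) (t : R) :
      (∃ y, A y ≤ b ∧ q y ≤ t) ↔ ∀ ψ ∈ Ψ, 0 ≤ ψ (b, 0) + t * ψ (0, 1) := by
    rw [← mem_epigraphCone, ← hΨ]
    refine forall₂_congr fun ψ _ => ?_
    rw [LinearMap.id_apply, ← smul_eq_mul, ← map_smul, ← map_add]
    simp
  have slope_nonneg : ∀ ψ ∈ Ψ, 0 ≤ ψ (0, 1) := by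
    have vertical_mem : ∃ y, A y ≤ 0 ∧ q y ≤ 1 := ⟨0, by simp⟩
    simpa [← Prod.zero_eq_mk] using (mem_iff 0 1).mp vertical_mem
  -- A constraint with `ψ (0, 1) = 0` restricts only `b`, and holds as soon as `b` is feasible.
  refine ⟨(Ψ.filter fun ψ => 0 < ψ (0, 1)).image
    fun ψ => -(ψ (0, 1))⁻¹ • ψ.comp (LinearMap.inl R F R), fun b ⟨y, hy⟩ t => ?_⟩
  simp only [mem_iff, Finset.forall_mem_image, Finset.mem_filter, and_imp]
  refine forall₂_congr fun ψ hψ => ?_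
  rcases (slope_nonneg ψ hψ).eq_or_lt with hzero | hpos
  · have hfeas := (mem_iff b (q y)).mp ⟨y, hy, le_rfl⟩ ψ hψ
    rw [← hzero, mul_zero] at hfeas ⊢
    simp only [hfeas, lt_irrefl, false_imp_iff]
  · simp only [hpos, true_imp_iff, LinearMap.smul_apply, LinearMap.comp_apply,
      LinearMap.inl_apply, smul_eq_mul]
    rw [neg_mul, inv_mul_eq_div, ← neg_div, div_le_iff₀ hpos, neg_le_iff_add_nonneg']

end ValueFunction

section LPArgmin

variable {R V F : Type*} [Semiring R] [Preorder R] [AddCommMonoid V] [Module R V]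
  [AddCommMonoid F] [Module R F] [LE F]

/-- The set of optimal solutions of the linear program of minimizing `d y` subject to `A y ≤ b`. -/
def lpArgmin (A : V →ₗ[R] F) (d : Dual R V) (b : F) : Set V :=
  {y | A y ≤ b ∧ IsMinOn d {y | A y ≤ b} y}

theorem lpArgmin_eq_setOf_prod_le {A : V →ₗ[R] F} {d : Dual R V} {b : F} {r : R}
    (hr : IsLeast (d '' {y | A y ≤ b}) r) : lpArgmin A d b = {y | A.prod d y ≤ (b, r)} := by
  obtain ⟨⟨y₀, hy₀, rfl⟩, hle⟩ := hr
  ext y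
  exact and_congr_right fun _ =>
    ⟨fun hmin => hmin hy₀, fun hy _ hy' => hy.trans (hle (mem_image_of_mem d hy'))⟩

end LPArgmin

section Lipschitz

theorem exists_lipschitzWith_sup' {X ι : Type*} [PseudoEMetricSpace X] {s : Finset ι}
    (hs : s.Nonempty) {f : ι → X → ℝ} (hf : ∀ i ∈ s, ∃ K, LipschitzWith K (f i)) :
    ∃ K, LipschitzWith K fun x => s.sup' hs (f · x) := by
  have sup_eq : s.sup' hs f = fun x => s.sup' hs (f · x) :=
    funext fun x => Finset.sup'_apply hs f x
  rw [← sup_eq]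
  exact Finset.sup'_induction (p := fun g => ∃ K, LipschitzWith K g) hs f
    (fun _ ⟨K, hK⟩ _ ⟨L, hL⟩ => ⟨max K L, hK.max hL⟩) hf

variable {V F : Type*} [AddCommGroup V] [Module ℝ V] [Module.Finite ℝ V]
  [NormedAddCommGroup F] [NormedSpace ℝ F] [FiniteDimensional ℝ F] [PartialOrder F]
  [IsOrderedAddMonoid F] [PosSMulMono ℝ F]

theorem exists_lipschitzWith_isLeast_linearProgram (hF : (positive ℝ F).DualFG .id)
    (A : V →ₗ[ℝ] F) (q : Dual ℝ V) {b₀ : F} (hne : ∃ y, A y ≤ b₀)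
    (hbdd : BddBelow (q '' {y | A y ≤ b₀})) :
    ∃ (K : ℝ≥0) (v : F → ℝ), LipschitzWith K v ∧
      ∀ b, (∃ y, A y ≤ b) → IsLeast (q '' {y | A y ≤ b}) (v b) := by
  obtain ⟨Φ, hΦ⟩ := exists_finset_forall_exists_le_iff hF A q
  have Φ_nonempty : Φ.Nonempty := by
    obtain ⟨r, hr⟩ := hbdd
    by_contra hempty
    rw [Finset.not_nonempty_iff_eq_empty] at hempty
    obtain ⟨y, hy, hlt⟩ := (hΦ b₀ hne (r - 1)).mpr (by simp [hempty])
    linarith [hr (mem_image_of_mem q hy)]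
  obtain ⟨K, hK⟩ := exists_lipschitzWith_sup' Φ_nonempty (f := fun φ x => φ x)
    fun φ _ => ⟨_, φ.toContinuousLinearMap.lipschitz⟩
  refine ⟨K, _, hK, fun b hb => ?_⟩
  have le_of_feasible (y : V) (hy : A y ≤ b) : Φ.sup' Φ_nonempty (fun φ => φ b) ≤ q y :=
    Finset.sup'_le _ _ ((hΦ b hb (q y)).mp ⟨y, hy, le_rfl⟩)
  obtain ⟨y, hy, hle⟩ := (hΦ b hb (Φ.sup' Φ_nonempty fun φ => φ b)).mpr
    fun _ => Finset.le_sup' fun φ : Dual ℝ F => φ b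
  exact ⟨⟨y, hy, hle.antisymm (le_of_feasible y hy)⟩, forall_mem_image.mpr le_of_feasible⟩

theorem exists_lipschitzWith_isLeast_lpArgmin (hF : (positive ℝ F).DualFG .id)
    (A : V →ₗ[ℝ] F) (d q : Dual ℝ V) {b₀ : F} (hne : (lpArgmin A d b₀).Nonempty)
    (hbdd : BddBelow (q '' lpArgmin A d b₀)) :
    ∃ (K : ℝ≥0) (w : F → ℝ), LipschitzWith K w ∧
      ∀ b, (∃ y, A y ≤ b) → IsLeast (q '' lpArgmin A d b) (w b) := by
  have ⟨y₀, hy₀, hmin⟩ := hne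
  obtain ⟨K, v, hK, hv⟩ := exists_lipschitzWith_isLeast_linearProgram hF A d ⟨y₀, hy₀⟩
    ⟨d y₀, forall_mem_image.mpr hmin⟩
  have argmin_eq (b : F) (hb : ∃ y, A y ≤ b) : lpArgmin A d b = {y | A.prod d y ≤ (b, v b)} :=
    lpArgmin_eq_setOf_prod_le (hv b hb)
  rw [argmin_eq b₀ ⟨y₀, hy₀⟩] at hne hbdd
  obtain ⟨L, w, hL, hw⟩ := exists_lipschitzWith_isLeast_linearProgram
    (dualFG_positive_prod hF dualFG_positive_self) (A.prod d) q hne hbdd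
  refine ⟨_, fun b => w (b, v b), hL.comp (LipschitzWith.id.prodMk hK), fun b hb => ?_⟩
  rw [argmin_eq b hb]
  obtain ⟨y, hy, hyv⟩ := (hv b hb).1
  exact hw _ ⟨y, hy, hyv.le⟩

end Lipschitz

section ValueAtRisk

variable {Ω : Type*} [MeasurableSpace Ω] {μ : Measure Ω} {α : ℝ≥0∞}

/-- The value-at-risk of the cost `F` at level `α`.  As a real infimum it takes the junk value `0`
when no real level qualifies or when all of them do. -/
def valueAtRisk (μ : Measure Ω) (α : ℝ≥0∞) (F : Ω → EReal) : ℝ :=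
  sInf {η : ℝ | α ≤ μ {ω | F ω ≤ η}}

theorem valueAtRisk_congr_ae {F G : Ω → EReal} (h : F =ᵐ[μ] G) :
    valueAtRisk μ α F = valueAtRisk μ α G := by
  have level (η : ℝ) : μ {ω | F ω ≤ η} = μ {ω | G ω ≤ η} :=
    measure_congr (h.fun_comp (· ≤ (η : EReal)))
  simp only [valueAtRisk, level]

theorem valueAtRisk_coe (F : Ω → ℝ) :
    valueAtRisk μ α (fun ω => (F ω : EReal)) = sInf {η : ℝ | α ≤ μ {ω | F ω ≤ η}} := by
  simp only [valueAtRisk, EReal.coe_le_coe_iff]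

theorem nonempty_setOf_le_measure_le (hα : α < μ univ) (F : Ω → ℝ) :
    {η : ℝ | α ≤ μ {ω | F ω ≤ η}}.Nonempty := by
  have hlim := tendsto_measure_iUnion_atTop (μ := μ) (s := fun η : ℝ => {ω | F ω ≤ η})
    fun _ _ hηη' _ hω => le_trans hω hηη'
  rw [iUnion_eq_univ_iff.mpr fun ω => ⟨F ω, le_refl (F ω)⟩] at hlim
  obtain ⟨η, hη⟩ := (hlim.eventually_const_lt hα).exists
  exact ⟨η, hη.le⟩

theorem bddBelow_setOf_le_measure_le [IsFiniteMeasure μ] (hα : α ≠ 0) {F : Ω → ℝ}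
    (hF : AEMeasurable F μ) : BddBelow {η : ℝ | α ≤ μ {ω | F ω ≤ η}} := by
  have hlim := tendsto_measure_iInter_atBot (μ := μ) (s := fun η : ℝ => {ω | F ω ≤ η})
    (fun η => nullMeasurableSet_le hF aemeasurable_const)
    (fun _ _ hηη' _ hω => le_trans hω hηη') ⟨0, measure_ne_top _ _⟩
  have hinter : ⋂ η : ℝ, {ω | F ω ≤ η} = ∅ :=
    iInter_eq_empty_iff.mpr fun ω => ⟨F ω - 1, by simp⟩
  rw [hinter, measure_empty] at hlim
  obtain ⟨η₀, hη₀⟩ := (hlim.eventually_lt_const (pos_iff_ne_zero.mpr hα)).exists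
  refine ⟨η₀, fun η hη => le_of_not_gt fun hlt => ?_⟩
  have hmono : μ {ω | F ω ≤ η} ≤ μ {ω | F ω ≤ η₀} := measure_mono fun _ hω => le_trans hω hlt.le
  exact (hη.trans hmono).not_gt hη₀

theorem valueAtRisk_le_add [IsFiniteMeasure μ] (hα₀ : α ≠ 0) (hα₁ : α < μ univ) {F G : Ω → ℝ}
    (hF : AEMeasurable F μ) {C : ℝ} (h : ∀ᵐ ω ∂μ, F ω ≤ G ω + C) :
    valueAtRisk μ α (fun ω => F ω) ≤ valueAtRisk μ α (fun ω => G ω) + C := by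
  rw [valueAtRisk_coe, valueAtRisk_coe, ← sub_le_iff_le_add]
  refine le_csInf (nonempty_setOf_le_measure_le hα₁ G) fun η hη => ?_
  rw [sub_le_iff_le_add]
  refine csInf_le (bddBelow_setOf_le_measure_le hα₀ hF) (hη.trans (measure_mono_ae ?_))
  filter_upwards [h] with ω hω hGω
  exact hω.trans (by gcongr; exact hGω)

theorem lipschitzWith_valueAtRisk [IsFiniteMeasure μ] (hα₀ : α ≠ 0) (hα₁ : α < μ univ)
    {X : Type*} [PseudoMetricSpace X] {K : ℝ≥0} {F : X → Ω → ℝ}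
    (hmeas : ∀ x, AEMeasurable (F x) μ) (hF : ∀ᵐ ω ∂μ, LipschitzWith K (F · ω)) :
    LipschitzWith K fun x => valueAtRisk μ α fun ω => F x ω :=
  .of_le_add_mul K fun x y => valueAtRisk_le_add hα₀ hα₁ (hmeas x)
    (hF.mono fun _ hω => hω.le_add_mul x y)

end ValueAtRisk

section Bilevel

variable {n m s : ℕ} {c : Fin n → ℝ} {q d : Fin m → ℝ}
  {A : Matrix (Fin s) (Fin m) ℝ} {T : Matrix (Fin s) (Fin n) ℝ}

theorem fE_eq_of_isLeast {x : Fin n → ℝ} {z : Fin s → ℝ} {r : ℝ}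
    (hr : IsLeast ((q ⬝ᵥ ·) '' Psi d A T x z) r) : fE c q d A T x z = ↑(c ⬝ᵥ x + r) := by
  have hcoe := EReal.coe_strictMono.monotone.map_isLeast hr
  rw [image_image] at hcoe
  rw [fE, hcoe.isGLB.sInf_eq, EReal.coe_add]

theorem Psi_nonempty_of_fE_ne_top {x : Fin n → ℝ} {z : Fin s → ℝ} (h : fE c q d A T x z ≠ ⊤) :
    (Psi d A T x z).Nonempty := by
  contrapose! h
  rw [fE, h, image_empty, sInf_empty, EReal.coe_add_top]

theorem bddBelow_image_Psi_of_fE_ne_bot {x : Fin n → ℝ} {z : Fin s → ℝ}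
    (h : fE c q d A T x z ≠ ⊥) : BddBelow ((q ⬝ᵥ ·) '' Psi d A T x z) := by
  have hbot : sInf ((fun y => ((q ⬝ᵥ y : ℝ) : EReal)) '' Psi d A T x z) ≠ ⊥ := fun hbot =>
    h (by rw [fE, hbot, EReal.add_bot])
  obtain ⟨r, -, hr⟩ := EReal.lt_iff_exists_real_btwn.mp (bot_lt_iff_ne_bot.mpr hbot)
  exact ⟨r, forall_mem_image.mpr fun y hy =>
    EReal.coe_le_coe_iff.mp (hr.le.trans (sInf_le (mem_image_of_mem _ hy)))⟩

theorem exists_lipschitzWith_eq_fE (hdom : (domf c q d A T).Nonempty) :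
    ∃ (K : ℝ≥0) (g : (Fin n → ℝ) × (Fin s → ℝ) → ℝ), LipschitzWith K g ∧
      ∀ p ∈ Pfeas A T, fE c q d A T p.1 p.2 = g p := by
  obtain ⟨⟨x₀, z₀⟩, htop, hbot⟩ := hdom
  -- `Psi d A T x z` unfolds to `lpArgmin A.mulVecLin (dotProductBilin ℝ ℝ d) (T.mulVec x + z)`.
  obtain ⟨K, w, hK, hw⟩ := exists_lipschitzWith_isLeast_lpArgmin (dualFG_positive_pi (Fin s))
    A.mulVecLin (dotProductBilin ℝ ℝ d) (dotProductBilin ℝ ℝ q)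
    (Psi_nonempty_of_fE_ne_top htop) (bddBelow_image_Psi_of_fE_ne_bot hbot)
  have linear_part : LipschitzWith _ fun x : Fin n → ℝ => c ⬝ᵥ x :=
    (LinearMap.toContinuousLinearMap (dotProductBilin ℝ ℝ c)).lipschitz
  have rhs : LipschitzWith _ fun p : (Fin n → ℝ) × (Fin s → ℝ) => T.mulVec p.1 + p.2 :=
    ((LinearMap.toContinuousLinearMap T.mulVecLin).lipschitz.comp .prod_fst).add .prod_snd
  exact ⟨_, fun p => c ⬝ᵥ p.1 + w (T.mulVec p.1 + p.2),
    (linear_part.comp .prod_fst).add (hK.comp rhs), fun p hp => fE_eq_of_isLeast (hw _ hp)⟩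

theorem ae_mem_msupport (μ : Measure (Fin s → ℝ)) : ∀ᵐ z ∂μ, z ∈ msupport μ := by
  filter_upwards [Measure.support_mem_ae (μ := μ)] with z hz U hU hzU
  exact ((Measure.mem_support_iff_forall z).mp hz U (hU.mem_nhds hzU)).ne'

theorem exists_lipschitzOnWith_valueAtRisk_fE (hdom : (domf c q d A T).Nonempty)
    {μZ : Measure (Fin s → ℝ)} [IsFiniteMeasure μZ] {α : ℝ≥0∞} (hα₀ : α ≠ 0)
    (hα₁ : α < μZ univ) :
    ∃ K, LipschitzOnWith K (fun x => valueAtRisk μZ α (fE c q d A T x)) (PZSet A T μZ) := by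
  obtain ⟨K, g, hK, hg⟩ := exists_lipschitzWith_eq_fE hdom
  have hVaR : LipschitzWith (K * 1) fun x => valueAtRisk μZ α fun z => g (x, z) :=
    lipschitzWith_valueAtRisk hα₀ hα₁
      (fun x => (hK.comp (.prodMk_left x)).continuous.aemeasurable)
      (.of_forall fun z => hK.comp (.prodMk_right z))
  have VaR_eq : ∀ x ∈ PZSet A T μZ,
      valueAtRisk μZ α (fE c q d A T x) = valueAtRisk μZ α fun z => g (x, z) := fun x hx =>
    valueAtRisk_congr_ae ((ae_mem_msupport μZ).mono fun z hz => hg (x, z) (hx z hz))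
  refine ⟨K * 1, fun x hx y hy => ?_⟩
  simp only [VaR_eq x hx, VaR_eq y hy]
  exact hVaR x y

end Bilevel

theorem valueAtRisk_continuous_and_attained {n m s : ℕ}
    (c : Fin n → ℝ) (q d : Fin m → ℝ)
    (A : Matrix (Fin s) (Fin m) ℝ) (T : Matrix (Fin s) (Fin n) ℝ)
    (μZ : Measure (Fin s → ℝ)) [IsProbabilityMeasure μZ]
    (hdom : (domf c q d A T).Nonempty) (α : ℝ) (hα : α ∈ Set.Ioo (0 : ℝ) 1)
    (Q : (Fin n → ℝ) → ℝ)
    (hQ : ∀ x, Q x =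
      sInf {η : ℝ | ENNReal.ofReal α ≤ μZ {z | fE c q d A T x z ≤ (η : EReal)}}) :
    ContinuousOn Q (PZSet A T μZ) ∧
    (∀ X : Set (Fin n → ℝ), X ⊆ PZSet A T μZ → X.Nonempty → IsCompact X →
      ∃ xstar ∈ X, ∀ x ∈ X, Q xstar ≤ Q x) := by
  obtain ⟨K, hK⟩ := exists_lipschitzOnWith_valueAtRisk_fE hdom (μZ := μZ)
    (ENNReal.ofReal_pos.mpr hα.1).ne'
    (by rw [measure_univ]; exact ENNReal.ofReal_lt_one.mpr hα.2)
  have hcont : ContinuousOn Q (PZSet A T μZ) := hK.continuousOn.congr fun x _ => hQ x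
  exact ⟨hcont, fun X hX hne hcompact => hcompact.exists_isMinOn hne (hcont.mono hX)⟩

end
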